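/- Let S = (X, (φ_j)_{j∈ℕ}, (q_j)_{j∈ℕ}) be a γ-uniformly contractive mpCIFS on a nonempty compact metric space X. For each n ≥ 1 set α_n = max_{1≤j≤n} q_j and q̃_j^n = q_j − α_n, and let M_n be the partial normalized Markov operator M_n(μ)(f) = max_{1≤j≤n} ( q̃_j^n + μ(f ∘ φ_j) ). Suppose that for each n, μ_n is an idempotent probability with M_n(μ_n) = μ_n, and that ν is an idempotent probability with M(ν) = ν, where M(μ)(f) = sup_{j∈ℕ} ( q_j + μ(f ∘ φ_j) ). Then μ_n converges to ν pointwise: for every g ∈ C(X,ℝ), μ_n(g) → ν(g) as n → ∞. -/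

import Mathlib

/-!
Two idempotent probabilities differ on `f` by at most the oscillation of `f`. Unrolling the
invariance equations `m` times replaces `f` by its compositions with words of `m` maps, and these
oscillate by at most `ε` as soon as `f` oscillates by at most `ε` at scale `γ ^ m * diam X`.
For the upper bound on `μ_n f` each unrolling costs the normalization `-α_n`, which tends to `0`.
For the lower bound, a near-maximizing index for `ν f` is available to the truncated system once
`n` is large, and the normalization only helps because `α_n ≤ 0`.
-/

open Filter Topology

def IsIdempotentProb {X : Type*} [TopologicalSpace X] (μ : C(X, ℝ) → ℝ) : Prop :=
  (∀ (c : ℝ) (f : C(X, ℝ)), μ (ContinuousMap.const X c + f) = c + μ f) ∧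
  (∀ f g : C(X, ℝ), μ (f ⊔ g) = max (μ f) (μ g)) ∧
  μ 0 = 0

open Set Function
open scoped NNReal

namespace IsIdempotentProb

variable {X : Type*} [TopologicalSpace X] {μ ν : C(X, ℝ) → ℝ}

theorem apply_const (hμ : IsIdempotentProb μ) (c : ℝ) : μ (ContinuousMap.const X c) = c := by
  simpa only [add_zero, hμ.2.2] using hμ.1 c 0

theorem monotone (hμ : IsIdempotentProb μ) : Monotone μ := fun f g hfg => by
  rw [← sup_eq_right.2 hfg, hμ.2.1]
  exact le_max_left _ _

theorem apply_le_of_forall_le (hμ : IsIdempotentProb μ) {f : C(X, ℝ)} {c : ℝ}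
    (hf : ∀ x, f x ≤ c) : μ f ≤ c :=
  (hμ.monotone (ContinuousMap.le_def.2 hf)).trans_eq (hμ.apply_const c)

theorem le_apply_of_forall_le (hμ : IsIdempotentProb μ) {f : C(X, ℝ)} {c : ℝ}
    (hf : ∀ x, c ≤ f x) : c ≤ μ f :=
  (hμ.apply_const c).symm.trans_le (hμ.monotone (ContinuousMap.le_def.2 hf))

theorem apply_le_apply_add [Nonempty X] (hμ : IsIdempotentProb μ) (hν : IsIdempotentProb ν)
    {f : C(X, ℝ)} {ε : ℝ} (hf : ∀ x y, f x ≤ f y + ε) : μ f ≤ ν f + ε :=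
  sub_le_iff_le_add.1 <| hν.le_apply_of_forall_le fun y =>
    sub_le_iff_le_add.2 <| hμ.apply_le_of_forall_le fun x => hf x y

end IsIdempotentProb

/-- The max-plus Markov operator of the iterated function system with maps `φ j` and weights `q j`.
The supremum is taken in `ℝ`, so it is meaningful only for weights that are bounded above. -/
noncomputable def maxPlusMarkov {X ι : Type*} [TopologicalSpace X] (q : ι → ℝ) (φ : ι → C(X, X))
    (μ : C(X, ℝ) → ℝ) (f : C(X, ℝ)) : ℝ :=
  ⨆ j, (q j + μ (f.comp (φ j)))

theorem IsIdempotentProb.le_maxPlusMarkov {X ι : Type*} [TopologicalSpace X] [CompactSpace X]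
    {q : ι → ℝ} {μ : C(X, ℝ) → ℝ} (hμ : IsIdempotentProb μ) (hq : BddAbove (range q))
    (φ : ι → C(X, X)) (f : C(X, ℝ)) (j : ι) :
    q j + μ (f.comp (φ j)) ≤ maxPlusMarkov q φ μ f := by
  have hbdd : BddAbove (range fun j => μ (f.comp (φ j))) :=
    ⟨‖f‖, forall_mem_range.2 fun j => hμ.apply_le_of_forall_le fun x => f.apply_le_norm (φ j x)⟩
  exact le_ciSup (hq.range_add hbdd) j

/-- The oscillation of `f` at scale `r` is at most `ε`. By symmetry of the distance the one-sided
inequality bounds `|f x - f y|`. -/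
def OscillationLE {X : Type*} [PseudoMetricSpace X] (f : C(X, ℝ)) (r ε : ℝ) : Prop :=
  ∀ x y, dist x y ≤ r → f x ≤ f y + ε

namespace OscillationLE

variable {X : Type*} [PseudoMetricSpace X] {f : C(X, ℝ)} {ε : ℝ}

theorem comp {K : ℝ≥0} {r : ℝ} {φ : C(X, X)} (hf : OscillationLE f (K * r) ε)
    (hφ : LipschitzWith K φ) : OscillationLE (f.comp φ) r ε :=
  fun x y hxy => hf (φ x) (φ y) <| hφ.dist_le_mul_of_le hxy

theorem le_add_of_diam [CompactSpace X] (hf : OscillationLE f (Metric.diam (univ : Set X)) ε)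
    (x y : X) : f x ≤ f y + ε :=
  hf x y <| Metric.dist_le_diam_of_mem isCompact_univ.isBounded (mem_univ x) (mem_univ y)

end OscillationLE

theorem exists_oscillationLE_pow_mul {X : Type*} [PseudoMetricSpace X] [CompactSpace X]
    (f : C(X, ℝ)) {K : ℝ≥0} (hK : K < 1) (D : ℝ) {ε : ℝ} (hε : 0 < ε) :
    ∃ m : ℕ, OscillationLE f (K ^ m * D) ε := by
  obtain ⟨δ, hδ, hfδ⟩ := Metric.uniformContinuous_iff.1
    (CompactSpace.uniformContinuous_of_continuous f.continuous) ε hε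
  have hscale : Tendsto (fun m : ℕ => (K : ℝ) ^ m * D) atTop (𝓝 0) := by
    simpa only [zero_mul] using (tendsto_pow_atTop_nhds_zero_of_lt_one K.coe_nonneg hK).mul_const D
  obtain ⟨m, hm⟩ := (hscale.eventually_lt_const hδ).exists
  refine ⟨m, fun x y hxy => ?_⟩
  have hdist : |f x - f y| < ε := hfδ (hxy.trans_lt hm)
  linarith [(abs_lt.1 hdist).2]

theorem tendsto_iSup_comp_of_eventually_mem_range {ι N α : Type*}
    [ConditionallyCompleteLinearOrder α] [TopologicalSpace α] [OrderTopology α] {l : Filter N}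
    {q : ι → α} {a : α} (hq : IsLUB (range q) a) {κ : N → Type*} [∀ n, Nonempty (κ n)]
    {e : ∀ n, κ n → ι} (he : ∀ j, ∀ᶠ n in l, j ∈ range (e n)) :
    Tendsto (fun n => ⨆ k, q (e n k)) l (𝓝 a) := by
  have hle (n : N) (k : κ n) : q (e n k) ≤ a := hq.1 (mem_range_self _)
  refine tendsto_order.2 ⟨fun b hb => ?_, fun b hb => .of_forall fun n =>
    (ciSup_le (hle n)).trans_lt hb⟩
  obtain ⟨_, ⟨j, rfl⟩, hbj⟩ := (lt_isLUB_iff hq).1 hb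
  filter_upwards [he j]
  rintro n ⟨k, rfl⟩
  exact hbj.trans_le (le_ciSup ⟨a, forall_mem_range.2 (hle n)⟩ k)

section Comparison

variable {X ι : Type*} [PseudoMetricSpace X] [CompactSpace X] [Nonempty X]
  {K : ℝ≥0} {φ : ι → C(X, X)} {q : ι → ℝ} {ν : C(X, ℝ) → ℝ}

theorem apply_le_of_isFixedPt_subsystem (hφ : ∀ j, LipschitzWith K (φ j))
    (hq : BddAbove (range q)) (hν : IsIdempotentProb ν) (hνfix : IsFixedPt (maxPlusMarkov q φ) ν)
    {κ : Type*} [Nonempty κ] {e : κ → ι} {a : ℝ} {μ : C(X, ℝ) → ℝ} (hμ : IsIdempotentProb μ)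
    (hμfix : IsFixedPt (maxPlusMarkov (fun k => q (e k) - a) (fun k => φ (e k))) μ)
    {m : ℕ} {f : C(X, ℝ)} {ε : ℝ}
    (hf : OscillationLE f (K ^ m * Metric.diam (univ : Set X)) ε) :
    μ f ≤ ν f - m * a + ε := by
  induction m generalizing f with
  | zero =>
    rw [pow_zero, one_mul] at hf
    simpa only [Nat.cast_zero, zero_mul, sub_zero] using hμ.apply_le_apply_add hν hf.le_add_of_diam
  | succ m ih =>
    rw [pow_succ', mul_assoc] at hf
    rw [← congrFun hμfix f]
    refine ciSup_le fun k => ?_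
    have hcomp : μ (f.comp (φ (e k))) ≤ ν (f.comp (φ (e k))) - m * a + ε :=
      ih (hf.comp (hφ (e k)))
    have hstep : q (e k) + ν (f.comp (φ (e k))) ≤ ν f :=
      (hν.le_maxPlusMarkov hq φ f (e k)).trans_eq (congrFun hνfix f)
    push_cast
    linarith

theorem eventually_lt_apply_of_isFixedPt_subsystems [Nonempty ι]
    (hφ : ∀ j, LipschitzWith K (φ j)) (hq : BddAbove (range q))
    (hν : IsIdempotentProb ν) (hνfix : IsFixedPt (maxPlusMarkov q φ) ν)
    {N : Type*} {l : Filter N} {κ : N → Type*} {e : ∀ n, κ n → ι}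
    (he : ∀ j, ∀ᶠ n in l, j ∈ range (e n)) {a : N → ℝ} (ha : ∀ n, a n ≤ 0)
    {μ : N → C(X, ℝ) → ℝ} (hμ : ∀ n, IsIdempotentProb (μ n))
    (hμfix : ∀ n,
      IsFixedPt (maxPlusMarkov (fun k => q (e n k) - a n) (fun k => φ (e n k))) (μ n))
    {m : ℕ} {f : C(X, ℝ)} {ε : ℝ}
    (hf : OscillationLE f (K ^ m * Metric.diam (univ : Set X)) ε) {c : ℝ} (hc : c < ν f - ε) :
    ∀ᶠ n in l, c < μ n f := by
  induction m generalizing f c with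
  | zero =>
    rw [pow_zero, one_mul] at hf
    refine .of_forall fun n => ?_
    linarith [hν.apply_le_apply_add (hμ n) hf.le_add_of_diam]
  | succ m ih =>
    rw [pow_succ', mul_assoc] at hf
    obtain ⟨j, hj⟩ : ∃ j, c + ε < q j + ν (f.comp (φ j)) :=
      exists_lt_of_lt_ciSup <| (lt_sub_iff_add_lt.1 hc).trans_eq (congrFun hνfix f).symm
    have hcomp : ∀ᶠ n in l, c - q j < μ n (f.comp (φ j)) :=
      ih (hf.comp (hφ j)) (by linarith)
    filter_upwards [hcomp, he j]
    rintro n hn ⟨k, rfl⟩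
    have hbdd : BddAbove (range fun k => q (e n k) - a n) :=
      (hq.mono (range_comp_subset_range (e n) q)).range_add (g := fun _ => -a n)
        ⟨-a n, forall_mem_range.2 fun _ => le_rfl⟩
    have hstep : q (e n k) - a n + μ n (f.comp (φ (e n k))) ≤ μ n f :=
      ((hμ n).le_maxPlusMarkov hbdd (fun k => φ (e n k)) f k).trans_eq (congrFun (hμfix n) f)
    linarith [ha n]

end Comparison

theorem partial_invariant_probs_tendsto_invariant_prob_general
    {X ι N : Type*} [PseudoMetricSpace X] [CompactSpace X] [Nonempty X] {K : ℝ≥0} (hK : K < 1)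
    {φ : ι → C(X, X)} (hφ : ∀ j, LipschitzWith K (φ j)) {q : ι → ℝ} (hq : IsLUB (range q) 0)
    {l : Filter N} {κ : N → Type*} [∀ n, Nonempty (κ n)] {e : ∀ n, κ n → ι}
    (he : ∀ j, ∀ᶠ n in l, j ∈ range (e n))
    {μ : N → C(X, ℝ) → ℝ} (hμ : ∀ n, IsIdempotentProb (μ n))
    (hμfix : ∀ n, IsFixedPt
      (maxPlusMarkov (fun k => q (e n k) - ⨆ k', q (e n k')) (fun k => φ (e n k))) (μ n))
    {ν : C(X, ℝ) → ℝ} (hν : IsIdempotentProb ν) (hνfix : IsFixedPt (maxPlusMarkov q φ) ν)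
    (g : C(X, ℝ)) : Tendsto (fun n => μ n g) l (𝓝 (ν g)) := by
  have hbdd : BddAbove (range q) := ⟨0, hq.1⟩
  have : Nonempty ι := range_nonempty_iff_nonempty.1 hq.nonempty
  refine tendsto_order.2 ⟨fun c hc => ?_, fun c hc => ?_⟩
  · obtain ⟨m, hm⟩ := exists_oscillationLE_pow_mul g hK (Metric.diam (univ : Set X))
      (half_pos (sub_pos.2 hc))
    exact eventually_lt_apply_of_isFixedPt_subsystems hφ hbdd hν hνfix he
      (fun n => ciSup_le fun k => hq.1 (mem_range_self (e n k))) hμ hμfix hm (by linarith)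
  · obtain ⟨m, hm⟩ := exists_oscillationLE_pow_mul g hK (Metric.diam (univ : Set X))
      (half_pos (sub_pos.2 hc))
    have hlim : Tendsto (fun n => ν g - m * (⨆ k, q (e n k)) + (c - ν g) / 2) l
        (𝓝 (ν g - m * 0 + (c - ν g) / 2)) :=
      (((tendsto_iSup_comp_of_eventually_mem_range hq he).const_mul _).const_sub _).add_const _
    filter_upwards [hlim.eventually_lt_const (u := c) (by linarith)] with n hn
    exact (apply_le_of_isFixedPt_subsystem hφ hbdd hν hνfix (hμ n) (hμfix n) hm).trans_lt hn

theorem partial_invariant_probs_tendsto_invariant_prob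
    {X : Type*} [MetricSpace X] [CompactSpace X] [Nonempty X]
    (γ : ℝ) (hγ0 : 0 < γ) (hγ1 : γ < 1)
    (φ : ℕ → X → X) (hφ : ∀ j, LipschitzWith (Real.toNNReal γ) (φ j))
    (q : ℕ → ℝ) (hq : ∀ j, q j ≤ 0) (hqsup : (⨆ j, q j) = 0)
    (μseq : ℕ → (C(X, ℝ) → ℝ))
    (hμseq : ∀ n : ℕ, IsIdempotentProb (μseq n) ∧
      (fun f : C(X, ℝ) => ⨆ j : Fin (n + 1),
          (q j - (⨆ j' : Fin (n + 1), q j') + μseq n (f.comp ⟨φ j, (hφ j).continuous⟩)))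
        = μseq n)
    (ν : C(X, ℝ) → ℝ)
    (hν : IsIdempotentProb ν ∧
      (fun f : C(X, ℝ) => ⨆ j : ℕ, (q j + ν (f.comp ⟨φ j, (hφ j).continuous⟩))) = ν) :
    ∀ g : C(X, ℝ), Tendsto (fun n : ℕ => μseq n g) atTop (𝓝 (ν g)) := by
  have hlub : IsLUB (range q) 0 := hqsup ▸ isLUB_ciSup ⟨0, forall_mem_range.2 hq⟩
  exact partial_invariant_probs_tendsto_invariant_prob_general
    (φ := fun j => ⟨φ j, (hφ j).continuous⟩) (Real.toNNReal_lt_one.2 hγ1) hφ hlub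
    (e := fun n (j : Fin (n + 1)) => (j : ℕ))
    (fun j => (eventually_ge_atTop j).mono fun _ hj => ⟨⟨j, Nat.lt_succ_of_le hj⟩, rfl⟩)
    (fun n => (hμseq n).1) (fun n => (hμseq n).2) hν.1 hν.2
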